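/- arXiv:2204.13534 — 2 statements merged into one kernel-verified Lean document; each statement's English description precedes it below -/
import Mathlib

section
/- In the block Markov chain model, let X be a sample path starting in equilibrium. Fix k₁, k₂ ∈ {1,…,K} with p_{k₁,k₂} > 0, and for each n a directed edge e_n ∈ V_{k₁} × V_{k₂}. Then N_{X,e_n} converges in distribution, as n → ∞, to the Poisson distribution with rate λ π(k₁) α_{k₁}^{−1} α_{k₂}^{−1} p_{k₁,k₂}. -/
/-!
The proof is the method of moments, applied to the binomial moments `E[C(N, m)]` of the edge
count `N`.

By Bonferroni (`bonferroni`), `P(N = k)` differs from the truncated alternating sum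
`∑ (-1)^r C(k + r, k) E[C(N, k + r)]` by at most the first omitted term. The same series with
`μ^m / m!` in place of `E[C(N, m)]` converges to the Poisson mass at `k`, so it suffices that
`E[C(N, m)] → μ^m / m!` for each fixed `m`; no bound uniform in `m` is needed.

For the moments, write `e = (i, j)`, let `q = P i j` and let `w` be the equilibrium mass of `i`.
Conditioning on the first traversal expresses the `(m+1)`-st moment of a stationary path as
`∑_{s < ℓ} w q g_m(s)`, where `g_m(s)` is the `m`-th moment of a path of `s` steps started at `j`
(`dotProduct_binMoment_succ`), and `g_{m+1}(L)` as `∑_{s < L} q g_m(s) P^{L-1-s}(j, i)`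
(`binMoment_succ_apply`). If the return probabilities `P^t(j, i)` were all equal to `w`, these
recursions would give exactly `C(ℓ, m) (w q)^m`, which tends to `μ^m / m!` because `ℓ w q → μ`.
The error is controlled by `q ∑_{t < ℓ} |P^t(j, i) - w|` (`dotProduct_binMoment_approx`). The
term `t = 0` contributes at most `q = O(1/n)`. For `t ≥ 1` the block structure gives
`P^t(j, i) - w = (p^t(k₂, k₁) - π(k₁)) / #V_{k₁}` (`bmcMatrix_pow_succ`), and `p^t → π` by a Doeblin
contraction (`tendsto_pow_stationary`), so, as `ℓ q / #V_{k₁}` stays bounded, Cesàro averaging makes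
the remaining terms vanish.
-/

open MeasureTheory ProbabilityTheory Filter Asymptotics Matrix
open scoped ENNReal NNReal BigOperators Topology

noncomputable section

/-- number of vertices in cluster `k` -/
def clusterCard {K : ℕ} (n : ℕ) (σ : Fin n → Fin K) (k : Fin K) : ℕ :=
  (Finset.univ.filter fun v : Fin n => σ v = k).card

/-- transition matrix of the block Markov chain -/
def bmcTrans {K n : ℕ} (p : Matrix (Fin K) (Fin K) ℝ) (σ : Fin n → Fin K)
    (x y : Fin n) : ℝ :=
  p (σ x) (σ y) / (clusterCard n σ (σ y) : ℝ)

/-- equilibrium distribution of the block Markov chain -/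
def bmcEquilib {K n : ℕ} (pst : Fin K → ℝ) (σ : Fin n → Fin K) (v : Fin n) : ℝ :=
  pst (σ v) / (clusterCard n σ (σ v) : ℝ)

/-- law of a sample path of length `ℓ+1` with one-step transition probabilities `P`
and initial distribution `ι` -/
def pathLaw (n ℓ : ℕ) (P : Fin n → Fin n → ℝ) (ι : Fin n → ℝ) :
    Measure (Fin (ℓ + 1) → Fin n) :=
  ∑ x : Fin (ℓ + 1) → Fin n,
    ENNReal.ofReal (ι (x 0) * ∏ t : Fin ℓ, P (x t.castSucc) (x t.succ)) • Measure.dirac x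

/-- empirical frequency matrix -/
def freqMatrix (n ℓ : ℕ) (ω : Fin (ℓ + 1) → Fin n) : Matrix (Fin n) (Fin n) ℝ :=
  Matrix.of fun i j => ∑ t : Fin ℓ, if ω t.castSucc = i ∧ ω t.succ = j then (1 : ℝ) else 0

/-- the number `N_{X,e}` of traversals of the directed edge `e` -/
def edgeCount (n ℓ : ℕ) (ω : Fin (ℓ + 1) → Fin n) (e : Fin n × Fin n) : ℕ :=
  (Finset.univ.filter fun t : Fin ℓ => ω t.castSucc = e.1 ∧ ω t.succ = e.2).card

/-- probability mass function of the Poisson distribution with mean `r` -/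
def poissonPMF (r : ℝ) (k : ℕ) : ℝ := Real.exp (-r) * r ^ k / (Nat.factorial k)

/-! ### Bonferroni inequality -/

lemma alternating_choose_partial (a R : ℕ) (ha : a ≠ 0) :
    ∑ r ∈ Finset.range (R + 1), (-1 : ℝ) ^ r * (a.choose r : ℝ)
      = (-1) ^ R * ((a - 1).choose R : ℝ) := by
  obtain ⟨b, rfl⟩ := Nat.exists_eq_succ_of_ne_zero ha
  induction R with
  | zero => simp
  | succ R ih =>
    rw [Finset.sum_range_succ, ih, Nat.succ_sub_one, Nat.choose_succ_succ]
    push_cast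
    ring

/-- Bonferroni inequality: the alternating sum of binomial moments that expresses `1{N = k}`,
truncated after `R + 1` terms, is off by at most the first omitted term. -/
lemma bonferroni (N k R : ℕ) :
    |(if N = k then (1 : ℝ) else 0) - ∑ r ∈ Finset.range (R + 1),
        (-1 : ℝ) ^ r * ((k + r).choose k : ℝ) * (N.choose (k + r) : ℝ)|
      ≤ ((k + (R + 1)).choose k : ℝ) * (N.choose (k + (R + 1)) : ℝ) := by
  rcases lt_or_ge N k with h | h
  · have h0 : ∀ r, N.choose (k + r) = 0 := fun r => Nat.choose_eq_zero_of_lt (by omega)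
    simp [h0, h.ne]
  have hmul : ∀ r, ((k + r).choose k : ℝ) * (N.choose (k + r) : ℝ)
      = (N.choose k : ℝ) * ((N - k).choose r : ℝ) := by
    intro r
    rcases lt_or_ge N (k + r) with hr | hr
    · rw [Nat.choose_eq_zero_of_lt hr, Nat.choose_eq_zero_of_lt (show N - k < r by omega)]
      simp
    · have := Nat.choose_mul (n := N) (Nat.le_add_right k r)
      rw [Nat.add_sub_cancel_left] at this
      rw [mul_comm]
      exact_mod_cast this
  have hsum : ∑ r ∈ Finset.range (R + 1),
        (-1 : ℝ) ^ r * ((k + r).choose k : ℝ) * (N.choose (k + r) : ℝ)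
      = (N.choose k : ℝ) *
        ∑ r ∈ Finset.range (R + 1), (-1 : ℝ) ^ r * ((N - k).choose r : ℝ) := by
    rw [Finset.mul_sum]
    refine Finset.sum_congr rfl fun r _ => ?_
    rw [mul_assoc, hmul]
    ring
  rw [hsum, hmul]
  rcases h.eq_or_lt with rfl | hlt
  · rw [Finset.sum_range_succ']
    simp
  · have ha : N - k ≠ 0 := by omega
    rw [alternating_choose_partial _ _ ha, if_neg hlt.ne', zero_sub, abs_neg, abs_mul, abs_mul]
    simp only [abs_pow, abs_neg, abs_one, one_pow, one_mul, Nat.abs_cast]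
    gcongr
    obtain ⟨b, hb⟩ := Nat.exists_eq_succ_of_ne_zero ha
    rw [hb, Nat.succ_sub_one, Nat.choose_succ_succ]
    exact Nat.le_add_right _ _

/-! ### Binomial moments of the edge count -/

/-- A measure-free version of `pathLaw`: the sum of `F` over all paths, weighted by the path
probabilities. -/
def pathSum (n ℓ : ℕ) (P : Matrix (Fin n) (Fin n) ℝ) (ι : Fin n → ℝ)
    (F : (Fin (ℓ + 1) → Fin n) → ℝ) : ℝ :=
  ∑ x : Fin (ℓ + 1) → Fin n, ι (x 0) * (∏ t : Fin ℓ, P (x t.castSucc) (x t.succ)) * F x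

lemma pathLaw_toReal (n ℓ : ℕ) (P : Matrix (Fin n) (Fin n) ℝ) (ι : Fin n → ℝ)
    (hP : ∀ x y, 0 ≤ P x y) (hι : ∀ x, 0 ≤ ι x) (e : Fin n × Fin n) (k : ℕ) :
    (pathLaw n ℓ (fun x y => P x y) ι {ω | edgeCount n ℓ ω e = k}).toReal
      = pathSum n ℓ P ι fun x => if edgeCount n ℓ x e = k then 1 else 0 := by
  have hw : ∀ x : Fin (ℓ + 1) → Fin n,
      0 ≤ ι (x 0) * ∏ t : Fin ℓ, P (x t.castSucc) (x t.succ) := fun x =>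
    mul_nonneg (hι _) (Finset.prod_nonneg fun _ _ => hP _ _)
  unfold pathLaw pathSum
  rw [Measure.finsetSum_apply, ENNReal.toReal_sum]
  · refine Finset.sum_congr rfl fun x _ => ?_
    rw [Measure.smul_apply, smul_eq_mul, ENNReal.toReal_mul, ENNReal.toReal_ofReal (hw x)]
    congr 1
    by_cases h : edgeCount n ℓ x e = k <;> simp [h]
  · intro x _
    rw [Measure.smul_apply, smul_eq_mul]
    exact ENNReal.mul_ne_top ENNReal.ofReal_ne_top (measure_ne_top _ _)

/-- `binMoment P i j m L x` is the `m`-th binomial moment `E_x[C(N, m)]` of the number `N` of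
traversals of `(i, j)` by a path of `L` steps started at `x`. It is defined through the
first-step recursion that Pascal's rule gives. -/
def binMoment {n : ℕ} (P : Matrix (Fin n) (Fin n) ℝ) (i j : Fin n) : ℕ → ℕ → Fin n → ℝ
  | 0, _ => fun _ => 1
  | _ + 1, 0 => fun _ => 0
  | m + 1, L + 1 => P *ᵥ binMoment P i j (m + 1) L
      + (P i j * binMoment P i j m L j) • Pi.single i 1

lemma edgeCount_cons (n L : ℕ) (v : Fin n) (x : Fin (L + 1) → Fin n) (e : Fin n × Fin n) :
    edgeCount n (L + 1) (Fin.cons v x : Fin (L + 1 + 1) → Fin n) e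
      = (if v = e.1 ∧ x 0 = e.2 then 1 else 0) + edgeCount n L x e := by
  unfold edgeCount
  rw [Finset.card_filter, Finset.card_filter, Fin.sum_univ_succ]
  simp

lemma pathSum_succ (n L : ℕ) (P : Matrix (Fin n) (Fin n) ℝ) (ι : Fin n → ℝ)
    (F : (Fin (L + 1 + 1) → Fin n) → ℝ) :
    pathSum n (L + 1) P ι F
      = ∑ v, ι v * pathSum n L P (P v) fun x => F (Fin.cons v x : Fin (L + 1 + 1) → Fin n) := by
  unfold pathSum
  rw [← (Fin.consEquiv fun _ : Fin (L + 1 + 1) => Fin n).sum_comp, Fintype.sum_prod_type]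
  refine Finset.sum_congr rfl fun v _ => ?_
  rw [Finset.mul_sum]
  refine Finset.sum_congr rfl fun x _ => ?_
  have hc : (Fin.consEquiv fun _ : Fin (L + 1 + 1) => Fin n) (v, x)
      = (Fin.cons v x : Fin (L + 1 + 1) → Fin n) := rfl
  rw [hc, Fin.prod_univ_succ]
  simp only [Fin.castSucc_zero, Fin.cons_zero, Fin.cons_succ,
    Fin.castSucc_succ]
  ring

/-- The recursive `binMoment` really computes the binomial moments of the edge count. -/
lemma pathSum_choose (n : ℕ) (P : Matrix (Fin n) (Fin n) ℝ) (hP1 : ∀ x, ∑ y, P x y = 1)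
    (e : Fin n × Fin n) (L : ℕ) : ∀ (m : ℕ) (ι : Fin n → ℝ),
    pathSum n L P ι (fun x => ((edgeCount n L x e).choose m : ℝ))
      = ι ⬝ᵥ binMoment P e.1 e.2 m L := by
  induction L with
  | zero =>
    intro m ι
    unfold pathSum
    rw [← (Equiv.funUnique (Fin 1) (Fin n)).symm.sum_comp]
    cases m <;> simp [edgeCount, binMoment, dotProduct]
  | succ L ih =>
    intro m ι
    rw [pathSum_succ]
    simp only [edgeCount_cons]
    unfold dotProduct
    refine Finset.sum_congr rfl fun v _ => ?_
    congr 1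
    cases m with
    | zero =>
      have := ih 0 (P v)
      simp only [Nat.choose_zero_right] at this ⊢
      rw [this]
      simp [binMoment, dotProduct, hP1]
    | succ m =>
      have hsplit : pathSum n L P (P v) (fun x =>
            ((((if v = e.1 ∧ x 0 = e.2 then 1 else 0) + edgeCount n L x e).choose (m + 1) : ℕ) : ℝ))
          = pathSum n L P (P v) (fun x => ((edgeCount n L x e).choose (m + 1) : ℝ))
            + pathSum n L P (fun y => if v = e.1 ∧ y = e.2 then P v y else 0)
                (fun x => ((edgeCount n L x e).choose m : ℝ)) := by
        unfold pathSum
        rw [← Finset.sum_add_distrib]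
        refine Finset.sum_congr rfl fun x _ => ?_
        by_cases h : v = e.1 ∧ x 0 = e.2
        · simp only [h, and_self, if_true]
          rw [add_comm 1, Nat.choose_succ_succ]
          push_cast
          ring
        · simp [h]
      rw [hsplit, ih, ih]
      simp only [binMoment, Pi.add_apply, mulVec, Pi.smul_apply, smul_eq_mul, Pi.single_apply]
      congr 1
      by_cases h : v = e.1
      · subst h
        simp [dotProduct]
      · simp [h, dotProduct]

lemma binMoment_succ_eq_sum {n : ℕ} (P : Matrix (Fin n) (Fin n) ℝ) (i j : Fin n) (m L : ℕ) :
    binMoment P i j (m + 1) L = ∑ s ∈ Finset.range L,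
      (P i j * binMoment P i j m s j) • (P ^ (L - 1 - s) *ᵥ Pi.single i (1 : ℝ)) := by
  induction L with
  | zero => rfl
  | succ L ih =>
    rw [Finset.sum_range_succ, binMoment, ih, mulVec_sum]
    congr 1
    · refine Finset.sum_congr rfl fun s hs => ?_
      have hs' := Finset.mem_range.1 hs
      rw [mulVec_smul, mulVec_mulVec, ← pow_succ', show L - 1 - s + 1 = L + 1 - 1 - s by omega]
    · rw [show L + 1 - 1 - L = 0 by omega, pow_zero, one_mulVec]

/-- First-traversal decomposition of the binomial moments at `j`: between two traversals of `(i, j)`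
the chain has to return from `j` to `i`. -/
lemma binMoment_succ_apply {n : ℕ} (P : Matrix (Fin n) (Fin n) ℝ) (i j : Fin n) (m L : ℕ) :
    binMoment P i j (m + 1) L j = ∑ s ∈ Finset.range L,
      P i j * binMoment P i j m s j * (P ^ (L - 1 - s)) j i := by
  rw [binMoment_succ_eq_sum, Finset.sum_apply]
  refine Finset.sum_congr rfl fun s _ => ?_
  simp

lemma dotProduct_binMoment_succ {n : ℕ} (P : Matrix (Fin n) (Fin n) ℝ) (ι : Fin n → ℝ)
    (hι : ι ᵥ* P = ι) (i j : Fin n) (m L : ℕ) :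
    ι ⬝ᵥ binMoment P i j (m + 1) L = ∑ s ∈ Finset.range L,
      ι i * P i j * binMoment P i j m s j := by
  induction L with
  | zero => simp [binMoment, dotProduct]
  | succ L ih =>
    rw [Finset.sum_range_succ, binMoment, dotProduct_add, dotProduct_mulVec, hι, ih,
      dotProduct_smul, dotProduct_single]
    simp only [smul_eq_mul]
    ring

lemma choose_mul_pow_succ (c : ℝ) (m L : ℕ) :
    (L.choose (m + 1) : ℝ) * c ^ (m + 1)
      = ∑ s ∈ Finset.range L, c * ((s.choose m : ℝ) * c ^ m) := by
  induction L with
  | zero => simp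
  | succ L ih =>
    rw [Finset.sum_range_succ, ← ih, Nat.choose_succ_succ]
    push_cast
    ring

/-! ### Comparison with independent trials -/

/-- Bound for the distance between the `m`-th binomial moment and its independent-trials value
`C(L, m) (w * P i j) ^ m`, where `w` is the equilibrium mass of `i`. Here `A` stands for the
expected number of traversals and `B` for the accumulated deviation of the return probabilities
from `w`, times the transition probability of the edge. -/
def errBound (A B : ℝ) : ℕ → ℝ
  | 0 => 0
  | m + 1 => A * errBound A B m + B * (errBound A B m + A ^ m)

lemma errBound_nonneg {A B : ℝ} (hA : 0 ≤ A) (hB : 0 ≤ B) (m : ℕ) : 0 ≤ errBound A B m := by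
  induction m with
  | zero => exact le_rfl
  | succ m ih => unfold errBound; positivity

lemma tendsto_errBound {A B : ℕ → ℝ} {μ : ℝ} (hA : Tendsto A atTop (𝓝 μ))
    (hB : Tendsto B atTop (𝓝 0)) (m : ℕ) :
    Tendsto (fun n => errBound (A n) (B n) m) atTop (𝓝 0) := by
  induction m with
  | zero => simp [errBound]
  | succ m ih => simpa [errBound] using (hA.mul ih).add (hB.mul (ih.add (hA.pow m)))

/-- The moments of paths started at `j` stay close to those of independent trials, uniformly over
lengths `L ≤ ℓ`, provided that the return probabilities from `j` to `i` accumulate little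
deviation `D` from the value `w`. -/
lemma binMoment_approx {n : ℕ} (P : Matrix (Fin n) (Fin n) ℝ) (i j : Fin n) (w D : ℝ) (ℓ : ℕ)
    (hw : 0 ≤ w) (hq : 0 ≤ P i j)
    (hD : ∑ s ∈ Finset.range ℓ, |(P ^ s) j i - w| ≤ D) (m : ℕ) :
    ∀ L ≤ ℓ, |binMoment P i j m L j - (L.choose m : ℝ) * (w * P i j) ^ m|
      ≤ errBound (ℓ * (w * P i j)) (P i j * D) m := by
  set A : ℝ := ℓ * (w * P i j) with hA
  set B : ℝ := P i j * D with hB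
  have hD0 : 0 ≤ D := (Finset.sum_nonneg fun _ _ => abs_nonneg _).trans hD
  have hA0 : 0 ≤ A := by positivity
  have hB0 : 0 ≤ B := by positivity
  induction m with
  | zero => intro L _; simp [binMoment, errBound]
  | succ m ih =>
    intro L hL
    have hE := errBound_nonneg hA0 hB0 m
    rw [binMoment_succ_apply, choose_mul_pow_succ, ← Finset.sum_sub_distrib]
    set E := errBound A B m with hEdef
    have hg : ∀ s ∈ Finset.range L, |binMoment P i j m s j| ≤ E + A ^ m := by
      intro s hs
      have hs' : s ≤ ℓ := (Finset.mem_range.1 hs).le.trans hL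
      have h1 := ih s hs'
      have h2 : (s.choose m : ℝ) * (w * P i j) ^ m ≤ A ^ m := by
        rw [hA, mul_pow (ℓ : ℝ)]
        gcongr
        calc (s.choose m : ℝ) ≤ (s : ℝ) ^ m := by exact_mod_cast Nat.choose_le_pow s m
          _ ≤ (ℓ : ℝ) ^ m := by gcongr
      have h3 : 0 ≤ (s.choose m : ℝ) * (w * P i j) ^ m := by positivity
      rw [abs_le] at h1 ⊢
      constructor <;> linarith
    have hterm : ∀ s ∈ Finset.range L,
        |P i j * binMoment P i j m s j * (P ^ (L - 1 - s)) j i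
          - w * P i j * ((s.choose m : ℝ) * (w * P i j) ^ m)|
        ≤ w * P i j * E + P i j * (E + A ^ m) * |(P ^ (L - 1 - s)) j i - w| := by
      intro s hs
      have hs' : s ≤ ℓ := (Finset.mem_range.1 hs).le.trans hL
      calc |P i j * binMoment P i j m s j * (P ^ (L - 1 - s)) j i
            - w * P i j * ((s.choose m : ℝ) * (w * P i j) ^ m)|
          = |w * P i j * (binMoment P i j m s j - (s.choose m : ℝ) * (w * P i j) ^ m)
              + P i j * binMoment P i j m s j * ((P ^ (L - 1 - s)) j i - w)| := by
            congr 1; ring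
        _ ≤ _ := abs_add_le _ _
        _ = w * P i j * |binMoment P i j m s j - (s.choose m : ℝ) * (w * P i j) ^ m|
              + P i j * |binMoment P i j m s j| * |(P ^ (L - 1 - s)) j i - w| := by
            rw [abs_mul, abs_mul (P i j * _), abs_mul (P i j),
              abs_of_nonneg (mul_nonneg hw hq), abs_of_nonneg hq]
        _ ≤ _ := by
            gcongr
            · exact ih s hs'
            · exact hg s hs
    calc _ ≤ ∑ s ∈ Finset.range L, _ := Finset.abs_sum_le_sum_abs _ _
      _ ≤ ∑ s ∈ Finset.range L,
          (w * P i j * E + P i j * (E + A ^ m) * |(P ^ (L - 1 - s)) j i - w|) :=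
        Finset.sum_le_sum hterm
      _ = L * (w * P i j) * E
          + P i j * (E + A ^ m) * ∑ s ∈ Finset.range L, |(P ^ s) j i - w| := by
        rw [Finset.sum_add_distrib, Finset.sum_const, ← Finset.mul_sum,
          Finset.sum_range_reflect (fun s => |(P ^ s) j i - w|), Finset.card_range, nsmul_eq_mul,
          mul_assoc (L : ℝ)]
      _ ≤ ℓ * (w * P i j) * E + P i j * (E + A ^ m) * D := by
        gcongr
        refine le_trans ?_ hD
        exact Finset.sum_le_sum_of_subset_of_nonneg (Finset.range_mono hL)
          fun _ _ _ => abs_nonneg _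
      _ = errBound A B (m + 1) := by
        rw [errBound, ← hEdef, hA, hB]
        ring

/-- The stationary binomial moments are close to those of independent trials. -/
lemma dotProduct_binMoment_approx {n : ℕ} (P : Matrix (Fin n) (Fin n) ℝ) (ι : Fin n → ℝ)
    (hι : ι ᵥ* P = ι) (hι1 : ∑ x, ι x = 1) (i j : Fin n) (D : ℝ) (ℓ : ℕ)
    (hw : 0 ≤ ι i) (hq : 0 ≤ P i j)
    (hD : ∑ s ∈ Finset.range ℓ, |(P ^ s) j i - ι i| ≤ D) (m : ℕ) :
    |ι ⬝ᵥ binMoment P i j m ℓ - (ℓ.choose m : ℝ) * (ι i * P i j) ^ m|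
      ≤ ℓ * (ι i * P i j) * errBound (ℓ * (ι i * P i j)) (P i j * D) (m - 1) := by
  cases m with
  | zero => simp [binMoment, dotProduct, hι1, errBound]
  | succ m =>
    rw [dotProduct_binMoment_succ P ι hι, choose_mul_pow_succ, ← Finset.sum_sub_distrib]
    refine (Finset.abs_sum_le_sum_abs _ _).trans ?_
    calc _ ≤ ∑ s ∈ Finset.range ℓ, ι i * P i j * errBound (ℓ * (ι i * P i j)) (P i j * D) m := by
          refine Finset.sum_le_sum fun s hs => ?_
          rw [← mul_sub, abs_mul, abs_of_nonneg (mul_nonneg hw hq)]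
          gcongr
          exact binMoment_approx P i j (ι i) D ℓ hw hq hD m s (Finset.mem_range.1 hs).le
      _ = _ := by simp [mul_assoc]

/-! ### Convergence to equilibrium of the cluster chain -/

/-- Doeblin contraction: a stochastic matrix with entries at least `δ` shrinks the `ℓ¹` norm of
zero-sum row vectors by a factor `1 - δ`. -/
lemma doeblin_contraction {K : ℕ} (Q : Matrix (Fin K) (Fin K) ℝ) (δ : ℝ) (hδ0 : 0 ≤ δ)
    (hδ : ∀ a b, δ ≤ Q a b) (hQ1 : ∀ a, ∑ b, Q a b = 1) (v : Fin K → ℝ) (hv : ∑ a, v a = 0) :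
    ∑ b, |(v ᵥ* Q) b| ≤ (1 - δ) * ∑ a, |v a| := by
  have h1 : ∀ b, |(v ᵥ* Q) b| ≤ ∑ a, |v a| * (Q a b - δ) := by
    intro b
    have : (v ᵥ* Q) b = ∑ a, v a * (Q a b - δ) := by
      simp only [mul_sub, Finset.sum_sub_distrib, ← Finset.sum_mul, hv]
      simp [vecMul, dotProduct]
    rw [this]
    refine (Finset.abs_sum_le_sum_abs _ _).trans (Finset.sum_le_sum fun a _ => ?_)
    rw [abs_mul, abs_of_nonneg (sub_nonneg.2 (hδ a b))]
  refine (Finset.sum_le_sum fun b _ => h1 b).trans ?_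
  rw [Finset.sum_comm, Finset.mul_sum]
  refine Finset.sum_le_sum fun a _ => ?_
  rw [← Finset.mul_sum, Finset.sum_sub_distrib, hQ1, mul_comm]
  gcongr
  have : (1 : ℝ) ≤ (K : ℝ) := by exact_mod_cast (Nat.one_le_of_lt a.2)
  simp
  nlinarith

lemma pow_stochastic {K : ℕ} (p : Matrix (Fin K) (Fin K) ℝ)
    (hp0 : ∀ i j, 0 ≤ p i j) (hp1 : ∀ i, ∑ j, p i j = 1) (s : ℕ) :
    (∀ i j, 0 ≤ (p ^ s) i j) ∧ ∀ i, ∑ j, (p ^ s) i j = 1 := by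
  induction s with
  | zero =>
    refine ⟨fun i j => ?_, fun i => ?_⟩
    · rw [pow_zero, one_apply]; split_ifs <;> simp
    · simp [one_apply]
  | succ s ih =>
    refine ⟨fun i j => ?_, fun i => ?_⟩
    · rw [pow_succ, mul_apply]
      exact Finset.sum_nonneg fun k _ => mul_nonneg (ih.1 i k) (hp0 k j)
    · simp only [pow_succ, mul_apply]
      rw [Finset.sum_comm]
      simp only [← Finset.mul_sum, hp1, mul_one, ih.2]

lemma vecMul_sum_eq_zero {K : ℕ} (Q : Matrix (Fin K) (Fin K) ℝ) (hQ1 : ∀ a, ∑ b, Q a b = 1)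
    (v : Fin K → ℝ) (hv : ∑ a, v a = 0) : ∑ b, (v ᵥ* Q) b = 0 := by
  simp only [vecMul, dotProduct]
  rw [Finset.sum_comm]
  simp only [← Finset.mul_sum, hQ1, mul_one, hv]

/-- Convergence to equilibrium of a primitive stochastic matrix. -/
lemma tendsto_pow_stationary {K : ℕ} (p : Matrix (Fin K) (Fin K) ℝ)
    (hp0 : ∀ i j, 0 ≤ p i j) (hp1 : ∀ i, ∑ j, p i j = 1)
    (hprim : ∃ r : ℕ, 0 < r ∧ ∀ i j, 0 < (p ^ r) i j)
    (pst : Fin K → ℝ) (hpst1 : ∑ i, pst i = 1) (hstat : ∀ j, ∑ i, pst i * p i j = pst j)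
    (a b : Fin K) : Tendsto (fun s => (p ^ s) a b) atTop (𝓝 (pst b)) := by
  obtain ⟨r, hr, hpos⟩ := hprim
  have : Nonempty (Fin K) := ⟨a⟩
  obtain ⟨⟨x, y⟩, hxy⟩ := Finite.exists_min fun z : Fin K × Fin K => (p ^ r) z.1 z.2
  set δ := (p ^ r) x y
  have hδ0 : 0 < δ := hpos x y
  have hst := pow_stochastic p hp0 hp1
  have hδ1 : δ ≤ 1 := by
    rw [← (hst r).2 x]
    exact Finset.single_le_sum (f := fun j => (p ^ r) x j) (fun j _ => (hst r).1 x j)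
      (Finset.mem_univ y)
  set v : Fin K → ℝ := Pi.single a 1 - pst with hv
  have hv0 : ∑ c, v c = 0 := by simp [hv, hpst1]
  have hpstp : ∀ s, pst ᵥ* p ^ s = pst := by
    intro s
    induction s with
    | zero => simp
    | succ s ih =>
      rw [pow_succ, ← vecMul_vecMul, ih]
      funext j
      simpa [vecMul, dotProduct] using hstat j
  have hvs : ∀ s c, (v ᵥ* p ^ s) c = (p ^ s) a c - pst c := by
    intro s c
    rw [hv, sub_vecMul, hpstp]
    simp
  have hblock : ∀ t, ∑ c, |(v ᵥ* p ^ (r * t)) c| ≤ (1 - δ) ^ t * ∑ c, |v c| := by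
    intro t
    induction t with
    | zero => simp
    | succ t ih =>
      rw [Nat.mul_succ, pow_add, ← vecMul_vecMul]
      refine (doeblin_contraction (p ^ r) δ hδ0.le (fun c d => hxy (c, d)) (hst r).2 _
        (vecMul_sum_eq_zero _ (hst _).2 v hv0)).trans ?_
      rw [pow_succ' (1 - δ), mul_assoc]
      gcongr
  have hall : ∀ s, |(p ^ s) a b - pst b| ≤ (1 - δ) ^ (s / r) * ∑ c, |v c| := by
    intro s
    rw [← hvs]
    refine (Finset.single_le_sum (f := fun c => |(v ᵥ* p ^ s) c|) (fun c _ => abs_nonneg _)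
      (Finset.mem_univ b)).trans (le_trans ?_ (hblock (s / r)))
    conv_lhs => rw [← Nat.div_add_mod s r]
    rw [pow_add, ← vecMul_vecMul]
    simpa using doeblin_contraction (p ^ (s % r)) 0 le_rfl (hst _).1 (hst _).2 _
      (vecMul_sum_eq_zero _ (hst _).2 v hv0)
  rw [tendsto_iff_norm_sub_tendsto_zero]
  refine squeeze_zero (fun _ => norm_nonneg _) hall ?_
  have h1 : Tendsto (fun s => (1 - δ) ^ (s / r)) atTop (𝓝 0) :=
    (tendsto_pow_atTop_nhds_zero_of_lt_one (by linarith) (by linarith)).comp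
      (Nat.tendsto_div_const_atTop hr.ne')
  simpa using h1.mul_const (∑ c, |v c|)

/-! ### The block Markov chain -/

lemma sum_div_clusterCard {K n : ℕ} (σ : Fin n → Fin K) (hσ : ∀ k, ∃ v, σ v = k)
    (h : Fin K → ℝ) : ∑ y, h (σ y) / (clusterCard n σ (σ y) : ℝ) = ∑ k, h k := by
  rw [← Finset.sum_fiberwise Finset.univ σ]
  refine Finset.sum_congr rfl fun k _ => ?_
  have hc : (clusterCard n σ k : ℝ) ≠ 0 := by
    obtain ⟨v, hv⟩ := hσ k
    have : 0 < clusterCard n σ k := Finset.card_pos.2 ⟨v, by simp [hv]⟩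
    positivity
  calc ∑ y with σ y = k, h (σ y) / (clusterCard n σ (σ y) : ℝ)
      = ∑ y with σ y = k, h k / (clusterCard n σ k : ℝ) := by
        refine Finset.sum_congr rfl fun y hy => ?_
        rw [(Finset.mem_filter.1 hy).2]
    _ = (clusterCard n σ k : ℝ) * (h k / (clusterCard n σ k : ℝ)) := by
        rw [Finset.sum_const, nsmul_eq_mul]; rfl
    _ = h k := by field_simp

/-- The block Markov chain's transition probabilities, as a matrix. -/
def bmcMatrix {K n : ℕ} (p : Matrix (Fin K) (Fin K) ℝ) (σ : Fin n → Fin K) :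
    Matrix (Fin n) (Fin n) ℝ := Matrix.of (bmcTrans p σ)

lemma bmcMatrix_apply {K n : ℕ} (p : Matrix (Fin K) (Fin K) ℝ) (σ : Fin n → Fin K)
    (x y : Fin n) :
    bmcMatrix p σ x y = p (σ x) (σ y) / (clusterCard n σ (σ y) : ℝ) := rfl

lemma bmcMatrix_row_sum {K n : ℕ} (p : Matrix (Fin K) (Fin K) ℝ) (σ : Fin n → Fin K)
    (hσ : ∀ k, ∃ v, σ v = k) (hp1 : ∀ i, ∑ j, p i j = 1) (x : Fin n) :
    ∑ y, bmcMatrix p σ x y = 1 := by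
  simp only [bmcMatrix_apply]
  rw [sum_div_clusterCard σ hσ (fun k => p (σ x) k), hp1]

lemma bmcEquilib_vecMul {K n : ℕ} (p : Matrix (Fin K) (Fin K) ℝ) (σ : Fin n → Fin K)
    (hσ : ∀ k, ∃ v, σ v = k) (pst : Fin K → ℝ) (hstat : ∀ j, ∑ i, pst i * p i j = pst j) :
    bmcEquilib pst σ ᵥ* bmcMatrix p σ = bmcEquilib pst σ := by
  funext y
  simp only [vecMul, dotProduct, bmcMatrix_apply, bmcEquilib]
  rw [← hstat (σ y), ← sum_div_clusterCard σ hσ (fun k => pst k * p k (σ y)), Finset.sum_div]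
  refine Finset.sum_congr rfl fun x _ => ?_
  ring

/-- From time one on, the chain is uniformly spread inside its current cluster. -/
lemma bmcMatrix_pow_succ {K n : ℕ} (p : Matrix (Fin K) (Fin K) ℝ) (σ : Fin n → Fin K)
    (hσ : ∀ k, ∃ v, σ v = k) (s : ℕ) (x y : Fin n) :
    (bmcMatrix p σ ^ (s + 1)) x y
      = (p ^ (s + 1)) (σ x) (σ y) / (clusterCard n σ (σ y) : ℝ) := by
  induction s generalizing x with
  | zero => simp [bmcMatrix_apply]
  | succ s ih =>
    rw [pow_succ', mul_apply, pow_succ' p, mul_apply,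
      ← sum_div_clusterCard σ hσ (fun k => p (σ x) k * (p ^ (s + 1)) k (σ y)), Finset.sum_div]
    refine Finset.sum_congr rfl fun z _ => ?_
    rw [ih, bmcMatrix_apply]
    ring

/-- Total deviation from equilibrium of the return probabilities. At time zero only the trivial
bound `1` is used: the edge may be a loop, and then the term is of order one. -/
lemma bmc_deviation {K n : ℕ} (p : Matrix (Fin K) (Fin K) ℝ) (σ : Fin n → Fin K)
    (hσ : ∀ k, ∃ v, σ v = k) (pst : Fin K → ℝ) (hpst0 : ∀ i, 0 ≤ pst i)
    (hpst1 : ∑ i, pst i = 1) (ℓ : ℕ) (i j : Fin n) :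
    ∑ s ∈ Finset.range ℓ, |(bmcMatrix p σ ^ s) j i - bmcEquilib pst σ i|
      ≤ 1 + (∑ s ∈ Finset.range ℓ, |(p ^ s) (σ j) (σ i) - pst (σ i)|)
          / (clusterCard n σ (σ i) : ℝ) := by
  have hc : (1 : ℝ) ≤ (clusterCard n σ (σ i) : ℝ) := by
    have : 0 < clusterCard n σ (σ i) := Finset.card_pos.2 ⟨i, by simp⟩
    exact_mod_cast this
  have hle : pst (σ i) ≤ 1 := by
    rw [← hpst1]
    exact Finset.single_le_sum (fun k _ => hpst0 k) (Finset.mem_univ _)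
  have hw0 : 0 ≤ bmcEquilib pst σ i := div_nonneg (hpst0 _) (by positivity)
  have hw1 : bmcEquilib pst σ i ≤ 1 := by
    unfold bmcEquilib
    rw [div_le_one (by positivity)]
    linarith
  cases ℓ with
  | zero => simp
  | succ ℓ =>
    rw [Finset.sum_range_succ', add_comm]
    gcongr
    · rw [pow_zero, one_apply, abs_le]
      split_ifs <;> constructor <;> linarith
    · rw [Finset.sum_range_succ', add_div, Finset.sum_div]
      have h0 : 0 ≤ |(p ^ 0) (σ j) (σ i) - pst (σ i)| / (clusterCard n σ (σ i) : ℝ) := by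
        positivity
      refine le_trans (Finset.sum_le_sum fun s _ => le_of_eq ?_) (le_add_of_nonneg_right h0)
      rw [bmcMatrix_pow_succ p σ hσ, bmcEquilib, ← sub_div, abs_div, Nat.abs_cast]

/-! ### Limits -/

lemma pathSum_bonferroni (n ℓ : ℕ) (P : Matrix (Fin n) (Fin n) ℝ) (ι : Fin n → ℝ)
    (hP : ∀ x y, 0 ≤ P x y) (hι : ∀ x, 0 ≤ ι x) (e : Fin n × Fin n) (k R : ℕ) :
    |pathSum n ℓ P ι (fun x => if edgeCount n ℓ x e = k then 1 else 0)
        - ∑ r ∈ Finset.range (R + 1), (-1 : ℝ) ^ r * ((k + r).choose k : ℝ)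
          * pathSum n ℓ P ι (fun x => ((edgeCount n ℓ x e).choose (k + r) : ℝ))|
      ≤ ((k + (R + 1)).choose k : ℝ)
          * pathSum n ℓ P ι (fun x => ((edgeCount n ℓ x e).choose (k + (R + 1)) : ℝ)) := by
  have hw : ∀ x : Fin (ℓ + 1) → Fin n,
      0 ≤ ι (x 0) * ∏ t : Fin ℓ, P (x t.castSucc) (x t.succ) := fun x =>
    mul_nonneg (hι _) (Finset.prod_nonneg fun _ _ => hP _ _)
  unfold pathSum
  simp only [Finset.mul_sum]
  rw [Finset.sum_comm, ← Finset.sum_sub_distrib]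
  refine (Finset.abs_sum_le_sum_abs _ _).trans (Finset.sum_le_sum fun x _ => ?_)
  have h := mul_le_mul_of_nonneg_left (bonferroni (edgeCount n ℓ x e) k R) (hw x)
  rw [← abs_of_nonneg (hw x), ← abs_mul, mul_sub, Finset.mul_sum, abs_of_nonneg (hw x)] at h
  refine le_trans (le_of_eq ?_) (h.trans (le_of_eq ?_))
  · congr 2
    refine Finset.sum_congr rfl fun r _ => ?_
    ring
  · ring

lemma poisson_series_term (μ : ℝ) (k r : ℕ) :
    ((k + r).choose k : ℝ) * (μ ^ (k + r) / ((k + r).factorial : ℝ))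
      = μ ^ k / (k.factorial : ℝ) * (μ ^ r / (r.factorial : ℝ)) := by
  have h : ((k + r).choose k : ℝ) * k.factorial * r.factorial = (k + r).factorial := by
    rw [Nat.choose_symm_add]
    exact_mod_cast Nat.add_choose_mul_factorial_mul_factorial k r
  have h1 : (k.factorial : ℝ) ≠ 0 := by positivity
  have h2 : (r.factorial : ℝ) ≠ 0 := by positivity
  have h3 : ((k + r).factorial : ℝ) ≠ 0 := by positivity
  rw [pow_add]
  field_simp
  rw [← h]
  ring

/-- The Poisson mass at `k` is the alternating series in the Poisson binomial moments
`μ ^ m / m!`. -/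
lemma tendsto_poisson_series (μ : ℝ) (k : ℕ) :
    Tendsto (fun R => ∑ r ∈ Finset.range (R + 1), (-1 : ℝ) ^ r * ((k + r).choose k : ℝ)
      * (μ ^ (k + r) / ((k + r).factorial : ℝ))) atTop (𝓝 (poissonPMF μ k)) := by
  have h := (NormedSpace.expSeries_div_hasSum_exp (-μ)).tendsto_sum_nat
  rw [← Real.exp_eq_exp_ℝ] at h
  have h2 := ((tendsto_add_atTop_iff_nat 1).2 h).const_mul (μ ^ k / (k.factorial : ℝ))
  have hlim : μ ^ k / (k.factorial : ℝ) * Real.exp (-μ) = poissonPMF μ k := by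
    unfold _root_.poissonPMF
    ring
  rw [hlim] at h2
  refine h2.congr fun R => ?_
  rw [Finset.mul_sum]
  refine Finset.sum_congr rfl fun r _ => ?_
  rw [mul_assoc, poisson_series_term, neg_pow]
  ring

lemma tendsto_poisson_remainder (μ : ℝ) (k : ℕ) :
    Tendsto (fun R => ((k + (R + 1)).choose k : ℝ)
      * (μ ^ (k + (R + 1)) / ((k + (R + 1)).factorial : ℝ))) atTop (𝓝 0) := by
  simp only [poisson_series_term]
  have h := (tendsto_add_atTop_iff_nat 1).2 (FloorSemiring.tendsto_pow_div_factorial_atTop μ)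
  simpa using h.const_mul (μ ^ k / (k.factorial : ℝ))

lemma tendsto_of_isLittleO_sub {u v : ℕ → ℝ} {c : ℝ} (hv : ∀ᶠ n in atTop, v n ≠ 0)
    (h : (fun n => u n - c * v n) =o[atTop] v) : Tendsto (fun n => u n / v n) atTop (𝓝 c) := by
  have h1 := h.tendsto_div_nhds_zero.add_const c
  rw [zero_add] at h1
  refine h1.congr' ?_
  filter_upwards [hv] with n hn
  field_simp
  ring

/-- The binomial moments of a binomial distribution converge to those of the Poisson
distribution. -/
lemma tendsto_choose_mul_pow {ℓ : ℕ → ℕ} (hℓ : Tendsto ℓ atTop atTop) {c : ℕ → ℝ} {μ : ℝ}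
    (hc : Tendsto (fun n => (ℓ n : ℝ) * c n) atTop (𝓝 μ)) (m : ℕ) :
    Tendsto (fun n => ((ℓ n).choose m : ℝ) * c n ^ m) atTop
      (𝓝 (μ ^ m / (m.factorial : ℝ))) := by
  have h1 : ((fun n => ((ℓ n).choose m : ℝ)) ~[atTop]
      fun n => ((ℓ n : ℝ) ^ m / (m.factorial : ℝ))) :=
    (isEquivalent_choose m).comp_tendsto hℓ
  have h2 := h1.mul (IsEquivalent.refl (u := fun n => c n ^ m))
  refine h2.symm.tendsto_nhds (((hc.pow m).div_const (m.factorial : ℝ)).congr fun n => ?_)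
  simp only [Pi.mul_apply, mul_pow]
  ring

/-- **Theorem (Poisson limit).** If `X` starts in equilibrium and `e_n ∈ V_{k₁} × V_{k₂}` with
`p_{k₁,k₂} > 0`, then `N_{X,e_n}` converges in distribution to
`Poisson(λ π(k₁) α_{k₁}⁻¹ α_{k₂}⁻¹ p_{k₁,k₂})`; equivalently, the probability mass functions
converge pointwise. -/
theorem poisson_limit_edge_count
    (K : ℕ) (hK : 1 ≤ K)
    (p : Matrix (Fin K) (Fin K) ℝ)
    (hp0 : ∀ i j, 0 ≤ p i j) (hp1 : ∀ i, ∑ j, p i j = 1)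
    -- irreducible and aperiodic (equivalently, primitive)
    (hprim : ∃ r : ℕ, 0 < r ∧ ∀ i j, 0 < (p ^ r) i j)
    (pst : Fin K → ℝ) (hpst0 : ∀ i, 0 ≤ pst i) (hpst1 : ∑ i, pst i = 1)
    (hstat : ∀ j, ∑ i, pst i * p i j = pst j)
    (α : Fin K → ℝ) (hα : ∀ k, 0 < α k) (hα1 : ∑ k, α k = 1)
    (lam : ℝ) (hlam : 0 < lam)
    (σ : (n : ℕ) → Fin n → Fin K)
    (hσne : ∀ n, K ≤ n → ∀ k, ∃ v : Fin n, σ n v = k)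
    (hσcard : ∀ k, (fun n => ((clusterCard n (σ n) k : ℝ) - α k * n))
        =o[atTop] fun n => (n : ℝ))
    (ℓ : ℕ → ℕ) (hℓ1 : ∀ n, 1 ≤ ℓ n)
    (hℓ : (fun n => ((ℓ n : ℝ) - lam * (n : ℝ) ^ 2)) =o[atTop] fun n => (n : ℝ) ^ 2)
    (k₁ k₂ : Fin K) (hp12 : 0 < p k₁ k₂)
    -- for each `n ≥ K` a directed edge `e n ∈ V_{k₁} × V_{k₂}`
    (e : (n : ℕ) → K ≤ n → Fin n × Fin n)
    (he : ∀ n (hn : K ≤ n), σ n (e n hn).1 = k₁ ∧ σ n (e n hn).2 = k₂) :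
    ∀ k : ℕ, ∀ ε : ℝ, 0 < ε → ∃ N : ℕ, ∀ n, ∀ hn : K ≤ n, N ≤ n →
      |((pathLaw n (ℓ n) (bmcTrans p (σ n)) (bmcEquilib pst (σ n))
            {ω | edgeCount n (ℓ n) ω (e n hn) = k}).toReal
        - poissonPMF (lam * pst k₁ * (α k₁)⁻¹ * (α k₂)⁻¹ * p k₁ k₂) k)| < ε := by
  -- Sequences that do not depend on the chosen edges, only on their clusters.
  set μ : ℝ := lam * pst k₁ * (α k₁)⁻¹ * (α k₂)⁻¹ * p k₁ k₂ with hμ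
  set c₁ : ℕ → ℝ := fun n => (clusterCard n (σ n) k₁ : ℝ) with hc₁
  set c₂ : ℕ → ℝ := fun n => (clusterCard n (σ n) k₂ : ℝ) with hc₂
  set dev : ℕ → ℝ := fun L => ∑ s ∈ Finset.range L, |(p ^ s) k₂ k₁ - pst k₁| with hdev
  set A : ℕ → ℝ := fun n => (ℓ n : ℝ) * (pst k₁ / c₁ n * (p k₁ k₂ / c₂ n)) with hA
  set B : ℕ → ℝ := fun n => p k₁ k₂ / c₂ n * (1 + dev (ℓ n) / c₁ n) with hB
  have hne : ∀ᶠ n : ℕ in atTop, (n : ℝ) ≠ 0 := by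
    filter_upwards [eventually_gt_atTop 0] with n hn
    positivity
  have hcard : ∀ k, Tendsto (fun n => (clusterCard n (σ n) k : ℝ) / n) atTop (𝓝 (α k)) :=
    fun k => tendsto_of_isLittleO_sub hne (hσcard k)
  have hcinv : ∀ k, Tendsto (fun n : ℕ => (n : ℝ) / (clusterCard n (σ n) k : ℝ)) atTop
      (𝓝 (α k)⁻¹) := fun k => by
    simpa using (hcard k).inv₀ (hα k).ne'
  have hℓ2 : Tendsto (fun n => (ℓ n : ℝ) / (n : ℝ) ^ 2) atTop (𝓝 lam) :=
    tendsto_of_isLittleO_sub (hne.mono fun n hn => pow_ne_zero 2 hn) hℓ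
  have hℓtop : Tendsto ℓ atTop atTop := by
    rw [← tendsto_natCast_atTop_iff (R := ℝ)]
    have hsq : Tendsto (fun n : ℕ => (n : ℝ) ^ 2) atTop atTop :=
      (tendsto_pow_atTop two_ne_zero).comp tendsto_natCast_atTop_atTop
    refine (hℓ2.pos_mul_atTop hlam hsq).congr' ?_
    filter_upwards [hne] with n hn
    field_simp
  have hℓc : Tendsto (fun n => (ℓ n : ℝ) / (c₁ n * c₂ n)) atTop
      (𝓝 (lam * (α k₁)⁻¹ * (α k₂)⁻¹)) := by
    refine ((hℓ2.mul (hcinv k₁)).mul (hcinv k₂)).congr' ?_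
    filter_upwards [hne] with n hn
    simp only [hc₁, hc₂]
    field_simp
  have hAlim : Tendsto A atTop (𝓝 μ) := by
    have h := (hℓc.mul_const (pst k₁ * p k₁ k₂))
    have hμ' : lam * (α k₁)⁻¹ * (α k₂)⁻¹ * (pst k₁ * p k₁ k₂) = μ := by rw [hμ]; ring
    rw [hμ'] at h
    refine h.congr fun n => ?_
    simp only [hA]
    ring
  have hc₂inv : Tendsto (fun n => 1 / c₂ n) atTop (𝓝 0) := by
    have h := (hcinv k₂).mul (tendsto_inv_atTop_nhds_zero_nat (𝕜 := ℝ))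
    rw [mul_zero] at h
    refine h.congr' ?_
    filter_upwards [hne] with n hn
    simp only [hc₂]
    field_simp
  have hBlim : Tendsto B atTop (𝓝 0) := by
    -- The deviations vanish, so their Cesàro means do, and `ℓ / (c₁ c₂)` stays bounded.
    have hp := tendsto_pow_stationary p hp0 hp1 hprim pst hpst1 hstat k₂ k₁
    have habs : Tendsto (fun s => |(p ^ s) k₂ k₁ - pst k₁|) atTop (𝓝 0) := by
      simpa using (hp.sub_const (pst k₁)).abs
    have hces := habs.cesaro.comp hℓtop
    have h := ((hc₂inv.add (hℓc.mul hces)).const_mul (p k₁ k₂))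
    simp only [mul_zero, add_zero] at h
    refine h.congr fun n => ?_
    have hℓn : (ℓ n : ℝ) ≠ 0 := by
      have := hℓ1 n
      positivity
    simp only [hB, hdev, Function.comp_apply]
    generalize ∑ s ∈ Finset.range (ℓ n), |(p ^ s) k₂ k₁ - pst k₁| = S
    rw [show (ℓ n : ℝ) / (c₁ n * c₂ n) * ((ℓ n : ℝ)⁻¹ * S) = S / (c₁ n * c₂ n) by field_simp]
    ring
  intro k ε hε
  -- `mom n m` is the independent-trials moment and `err n m` bounds the distance to the true one.
  set mom : ℕ → ℕ → ℝ := fun n m =>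
    ((ℓ n).choose m : ℝ) * (pst k₁ / c₁ n * (p k₁ k₂ / c₂ n)) ^ m with hmom
  set err : ℕ → ℕ → ℝ := fun n m => A n * errBound (A n) (B n) (m - 1) with herr
  have hmomlim : ∀ m, Tendsto (fun n => mom n m) atTop (𝓝 (μ ^ m / (m.factorial : ℝ))) :=
    fun m => tendsto_choose_mul_pow hℓtop hAlim m
  have herrlim : ∀ m, Tendsto (fun n => err n m) atTop (𝓝 0) := fun m => by
    simpa using hAlim.mul (tendsto_errBound hAlim hBlim (m - 1))
  set V : ℕ → ℝ := fun R =>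
    ((k + (R + 1)).choose k : ℝ) * (μ ^ (k + (R + 1)) / ((k + (R + 1)).factorial : ℝ))
      + |∑ r ∈ Finset.range (R + 1), (-1 : ℝ) ^ r * ((k + r).choose k : ℝ)
          * (μ ^ (k + r) / ((k + r).factorial : ℝ)) - poissonPMF μ k| with hV
  have hVlim : Tendsto V atTop (𝓝 0) := by
    simpa using (tendsto_poisson_remainder μ k).add
      ((tendsto_poisson_series μ k).sub_const (poissonPMF μ k)).abs
  obtain ⟨R, hR⟩ := (hVlim.eventually_lt_const hε).exists
  set U : ℕ → ℝ := fun n =>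
    ((k + (R + 1)).choose k : ℝ) * (mom n (k + (R + 1)) + err n (k + (R + 1)))
      + ∑ r ∈ Finset.range (R + 1), ((k + r).choose k : ℝ) * err n (k + r)
      + |∑ r ∈ Finset.range (R + 1), (-1 : ℝ) ^ r * ((k + r).choose k : ℝ) * mom n (k + r)
          - poissonPMF μ k| with hU
  have hUlim : Tendsto U atTop (𝓝 (V R)) := by
    have h1 := ((hmomlim (k + (R + 1))).add (herrlim (k + (R + 1)))).const_mul
      ((k + (R + 1)).choose k : ℝ)
    have h2 : Tendsto (fun n => ∑ r ∈ Finset.range (R + 1),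
        ((k + r).choose k : ℝ) * err n (k + r)) atTop (𝓝 (∑ r ∈ Finset.range (R + 1), 0)) :=
      tendsto_finsetSum _ fun r _ => by simpa using (herrlim (k + r)).const_mul _
    have h3 : Tendsto (fun n => ∑ r ∈ Finset.range (R + 1),
        (-1 : ℝ) ^ r * ((k + r).choose k : ℝ) * mom n (k + r)) atTop
        (𝓝 (∑ r ∈ Finset.range (R + 1), (-1 : ℝ) ^ r * ((k + r).choose k : ℝ)
          * (μ ^ (k + r) / ((k + r).factorial : ℝ)))) :=
      tendsto_finsetSum _ fun r _ => (hmomlim (k + r)).const_mul _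
    have h := (h1.add h2).add (h3.sub_const (poissonPMF μ k)).abs
    simpa only [Finset.sum_const_zero, add_zero] using h
  obtain ⟨N, hN⟩ := eventually_atTop.1 (hUlim.eventually_lt_const hR)
  refine ⟨N, fun n hn hNn => lt_of_le_of_lt ?_ (hN n hNn)⟩
  obtain ⟨he1, he2⟩ := he n hn
  have hσ := hσne n hn
  have hP0 : ∀ x y, 0 ≤ bmcMatrix p (σ n) x y := fun x y =>
    div_nonneg (hp0 _ _) (Nat.cast_nonneg _)
  have hι0 : ∀ x, 0 ≤ bmcEquilib pst (σ n) x := fun x =>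
    div_nonneg (hpst0 _) (Nat.cast_nonneg _)
  have hι1 : ∑ x, bmcEquilib pst (σ n) x = 1 := by
    simpa only [bmcEquilib, hpst1] using sum_div_clusterCard (σ n) hσ pst
  have hprob := pathLaw_toReal n (ℓ n) (bmcMatrix p (σ n)) _ hP0 hι0 (e n hn) k
  have hbon := pathSum_bonferroni n (ℓ n) (bmcMatrix p (σ n)) _ hP0 hι0 (e n hn) k R
  simp only [pathSum_choose n _ (bmcMatrix_row_sum p (σ n) hσ hp1)] at hbon
  rw [← hprob] at hbon
  set prob := (pathLaw n (ℓ n) (bmcTrans p (σ n)) (bmcEquilib pst (σ n))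
            {ω | edgeCount n (ℓ n) ω (e n hn) = k}).toReal with hprobdef
  change |prob - _| ≤ _ at hbon
  have happ : ∀ m, |bmcEquilib pst (σ n) ⬝ᵥ
      binMoment (bmcMatrix p (σ n)) (e n hn).1 (e n hn).2 m (ℓ n) - mom n m| ≤ err n m := by
    intro m
    have h := dotProduct_binMoment_approx (bmcMatrix p (σ n)) _
      (bmcEquilib_vecMul p (σ n) hσ pst hstat) hι1 (e n hn).1 (e n hn).2 _ (ℓ n)
      (hι0 _) (hP0 _ _) (bmc_deviation p (σ n) hσ pst hpst0 hpst1 (ℓ n) _ _) m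
    simpa only [bmcEquilib, bmcMatrix_apply, he1, he2] using h
  obtain ⟨b, hb⟩ : ∃ b : ℕ → ℝ, ∀ m, bmcEquilib pst (σ n) ⬝ᵥ
      binMoment (bmcMatrix p (σ n)) (e n hn).1 (e n hn).2 m (ℓ n) = b m := ⟨_, fun _ => rfl⟩
  simp only [hb] at hbon happ
  have hlast : ((k + (R + 1)).choose k : ℝ) * b (k + (R + 1))
      ≤ ((k + (R + 1)).choose k : ℝ) * (mom n (k + (R + 1)) + err n (k + (R + 1))) := by
    gcongr
    have := (abs_le.1 (happ (k + (R + 1)))).2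
    linarith
  have hmid : |∑ r ∈ Finset.range (R + 1), (-1 : ℝ) ^ r * ((k + r).choose k : ℝ) * b (k + r)
        - ∑ r ∈ Finset.range (R + 1), (-1 : ℝ) ^ r * ((k + r).choose k : ℝ) * mom n (k + r)|
      ≤ ∑ r ∈ Finset.range (R + 1), ((k + r).choose k : ℝ) * err n (k + r) := by
    rw [← Finset.sum_sub_distrib]
    refine (Finset.abs_sum_le_sum_abs _ _).trans (Finset.sum_le_sum fun r _ => ?_)
    rw [← mul_sub, abs_mul, abs_mul, abs_pow, abs_neg, abs_one, one_pow, one_mul, Nat.abs_cast]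
    gcongr
    exact happ (k + r)
  calc |prob - poissonPMF μ k|
      ≤ |prob - ∑ r ∈ Finset.range (R + 1), (-1 : ℝ) ^ r * ((k + r).choose k : ℝ) * b (k + r)|
        + |∑ r ∈ Finset.range (R + 1), (-1 : ℝ) ^ r * ((k + r).choose k : ℝ) * b (k + r)
          - poissonPMF μ k| := abs_sub_le _ _ _
    _ ≤ _ + (_ + _) := add_le_add_right (abs_sub_le _
        (∑ r ∈ Finset.range (R + 1), (-1 : ℝ) ^ r * ((k + r).choose k : ℝ) * mom n (k + r)) _) _
    _ ≤ U n := by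
        rw [hU]
        linarith [hbon.trans hlast, hmid]

end
end

section
/- In the block Markov chain model, let X be a sample path starting in equilibrium. Fix k₁, k₂ ∈ {1,…,K} with p_{k₁,k₂} > 0, and for each n a directed edge e_n ∈ V_{k₁} × V_{k₂}. Then Var[N_{X,e_n}] → λ π(k₁) α_{k₁}^{−1} α_{k₂}^{−1} p_{k₁,k₂} as n → ∞. -/
/-!
Write `P` for the transition matrix of the block chain, `Π` for its equilibrium law, `e = (i, j)`,
and `q = Π(i) P(i,j)`. Conditioning on the last step of the path gives recursions in `ℓ` for the
first two moments of `N_{X,e}` (`moment_one`, `moment_two`), and solving them yields the exact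
formula (`variance_edgeCount_eq`)

  `Var N = ℓ q - ℓ q² + 2 P(i,j) q ∑_{s<ℓ} ∑_{m<s} (P^m(j,i) - Π(i))`.

Primitivity of `p` gives a minorization `P^r ≥ δ Π` with `r` and `δ` independent of `n`: powers of
`P` are powers of `p` divided by cluster sizes (`bmcTrans_pow`). Hence
`∑_m |P^m(j,i) - Π(i)| ≤ r / δ` uniformly in `n` (`sum_mixing_le`). Everything but the first term is
therefore at most a constant times `ℓ q · P(i,j)`. Since `ℓ q` converges to the claimed limit and
`P(i,j) = p_{k₁,k₂} / #V_{k₂}` tends to `0`, the result follows.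
-/

open MeasureTheory ProbabilityTheory Filter Asymptotics Matrix
open scoped ENNReal NNReal BigOperators Topology

noncomputable section

/-! ### Moments of the edge count as sums over paths -/

/-- The weight `ι(x₀) ∏ P(x_t, x_{t+1})` of a path. -/
def pathWeight {n : ℕ} (P : Matrix (Fin n) (Fin n) ℝ) (ι : Fin n → ℝ) (ℓ : ℕ)
    (x : Fin (ℓ + 1) → Fin n) : ℝ :=
  ι (x 0) * ∏ t : Fin ℓ, P (x t.castSucc) (x t.succ)

lemma pathWeight_snoc {n : ℕ} (P : Matrix (Fin n) (Fin n) ℝ) (ι : Fin n → ℝ) (ℓ : ℕ)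
    (x : Fin (ℓ + 1) → Fin n) (y : Fin n) :
    pathWeight P ι (ℓ + 1) (Fin.snoc (α := fun _ => Fin n) x y)
      = pathWeight P ι ℓ x * P (x (Fin.last ℓ)) y := by
  unfold pathWeight
  rw [Fin.prod_univ_castSucc, ← mul_assoc]
  have h0 : (Fin.snoc (α := fun _ => Fin n) x y : Fin (ℓ + 2) → Fin n) 0 = x 0 :=
    Fin.snoc_castSucc (α := fun _ => Fin n) y x 0
  simp only [h0, Fin.snoc_castSucc, Fin.succ_castSucc, Fin.succ_last, Fin.snoc_last]

lemma edgeCount_snoc {n : ℕ} (ℓ : ℕ) (x : Fin (ℓ + 1) → Fin n) (y : Fin n) (e : Fin n × Fin n) :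
    (edgeCount n (ℓ + 1) (Fin.snoc (α := fun _ => Fin n) x y) e : ℝ)
      = edgeCount n ℓ x e + if x (Fin.last ℓ) = e.1 ∧ y = e.2 then 1 else 0 := by
  unfold edgeCount
  simp only [Finset.card_filter]
  rw [Fin.sum_univ_castSucc]
  simp only [Fin.snoc_castSucc, Fin.succ_castSucc, Fin.succ_last, Fin.snoc_last]
  push_cast
  rfl

lemma sum_path_snoc {n ℓ : ℕ} (F : (Fin (ℓ + 2) → Fin n) → ℝ) :
    ∑ x, F x = ∑ x : Fin (ℓ + 1) → Fin n, ∑ y, F (Fin.snoc (α := fun _ => Fin n) x y) := by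
  rw [← (Fin.snocEquiv (fun _ : Fin (ℓ + 2) => Fin n)).sum_comp, Fintype.sum_prod_type,
    Finset.sum_comm]
  rfl

section Moments

variable {n : ℕ} {P : Matrix (Fin n) (Fin n) ℝ} {ι : Fin n → ℝ}

/-- In equilibrium the final vertex of the path has law `ι`. -/
lemma moment_zero (hst : ∀ y, ∑ x, ι x * P x y = ι y) (ℓ : ℕ) (h : Fin n → ℝ) :
    ∑ x, pathWeight P ι ℓ x * h (x (Fin.last ℓ)) = ∑ v, ι v * h v := by
  induction ℓ generalizing h with
  | zero =>
    rw [← (Equiv.funUnique (Fin 1) (Fin n)).symm.sum_comp]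
    simp [pathWeight]
  | succ ℓ ih =>
    rw [sum_path_snoc]
    simp only [pathWeight_snoc, Fin.snoc_last, mul_assoc, ← Finset.mul_sum]
    rw [ih (fun v => ∑ y, P v y * h y)]
    simp only [Finset.mul_sum]
    rw [Finset.sum_comm]
    refine Finset.sum_congr rfl fun y _ => ?_
    rw [← hst y, Finset.sum_mul]
    exact Finset.sum_congr rfl fun x _ => by ring

/-- `E[N_ℓ h(X_ℓ)]`: each traversal of `e` at time `t` contributes
`ι(e₁) P(e₁,e₂) (P^{ℓ-t-1} h)(e₂)`. -/
lemma moment_one (hst : ∀ y, ∑ x, ι x * P x y = ι y) (e : Fin n × Fin n)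
    (ℓ : ℕ) (h : Fin n → ℝ) :
    ∑ x, pathWeight P ι ℓ x * ((edgeCount n ℓ x e : ℝ) * h (x (Fin.last ℓ)))
      = ι e.1 * P e.1 e.2 * ∑ m ∈ Finset.range ℓ, ((P ^ m) *ᵥ h) e.2 := by
  induction ℓ generalizing h with
  | zero => simp [edgeCount]
  | succ ℓ ih =>
    rw [sum_path_snoc]
    have key : ∀ x : Fin (ℓ + 1) → Fin n,
        ∑ y, pathWeight P ι (ℓ + 1) (Fin.snoc (α := fun _ => Fin n) x y) *
          ((edgeCount n (ℓ + 1) (Fin.snoc (α := fun _ => Fin n) x y) e : ℝ) *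
            h ((Fin.snoc (α := fun _ => Fin n) x y : Fin (ℓ + 2) → Fin n) (Fin.last (ℓ + 1))))
        = pathWeight P ι ℓ x * ((edgeCount n ℓ x e : ℝ) * (P *ᵥ h) (x (Fin.last ℓ)))
          + pathWeight P ι ℓ x *
            (if x (Fin.last ℓ) = e.1 then P e.1 e.2 * h e.2 else 0) := by
      intro x
      simp only [pathWeight_snoc, edgeCount_snoc, Fin.snoc_last, add_mul, mul_add,
        Finset.sum_add_distrib]
      congr 1
      · simp only [Matrix.mulVec, dotProduct, Finset.mul_sum]
        exact Finset.sum_congr rfl fun y _ => by ring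
      · by_cases hx : x (Fin.last ℓ) = e.1
        · simp [hx, mul_assoc]
        · simp [hx]
    rw [Finset.sum_congr rfl fun x _ => key x, Finset.sum_add_distrib, ih,
      moment_zero hst ℓ (fun v => if v = e.1 then P e.1 e.2 * h e.2 else 0),
      Finset.sum_range_succ']
    simp only [Matrix.mulVec_mulVec, ← pow_succ, pow_zero, Matrix.one_mulVec]
    simp
    ring

lemma moment_two (hP1 : ∀ x, ∑ y, P x y = 1) (hst : ∀ y, ∑ x, ι x * P x y = ι y)
    (e : Fin n × Fin n) (ℓ : ℕ) :
    ∑ x, pathWeight P ι ℓ x * (edgeCount n ℓ x e : ℝ) ^ 2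
      = ℓ * (ι e.1 * P e.1 e.2) + 2 * P e.1 e.2 * (ι e.1 * P e.1 e.2) *
        ∑ s ∈ Finset.range ℓ, ∑ m ∈ Finset.range s, (P ^ m) e.2 e.1 := by
  induction ℓ with
  | zero => simp [edgeCount]
  | succ ℓ ih =>
    rw [sum_path_snoc]
    have key : ∀ x : Fin (ℓ + 1) → Fin n,
        ∑ y, pathWeight P ι (ℓ + 1) (Fin.snoc (α := fun _ => Fin n) x y) *
          (edgeCount n (ℓ + 1) (Fin.snoc (α := fun _ => Fin n) x y) e : ℝ) ^ 2
        = pathWeight P ι ℓ x * (edgeCount n ℓ x e : ℝ) ^ 2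
          + 2 * P e.1 e.2 * (pathWeight P ι ℓ x * ((edgeCount n ℓ x e : ℝ) *
            Pi.single (M := fun _ => ℝ) e.1 1 (x (Fin.last ℓ))))
          + P e.1 e.2 * (pathWeight P ι ℓ x *
            Pi.single (M := fun _ => ℝ) e.1 1 (x (Fin.last ℓ))) := by
      intro x
      simp only [pathWeight_snoc, edgeCount_snoc, add_sq, mul_add, Finset.sum_add_distrib]
      congr 1
      · congr 1
        · rw [← Finset.sum_mul, ← Finset.mul_sum, hP1, mul_one]
        · by_cases hx : x (Fin.last ℓ) = e.1
          · simp [hx]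
            ring
          · simp [hx]
      · by_cases hx : x (Fin.last ℓ) = e.1
        · simp [hx]
          ring
        · simp [hx]
    rw [Finset.sum_congr rfl fun x _ => key x, Finset.sum_add_distrib, Finset.sum_add_distrib,
      ih, ← Finset.mul_sum, ← Finset.mul_sum, moment_one hst, moment_zero hst,
      Finset.sum_range_succ]
    simp [Pi.single_apply]
    ring

end Moments

/-! ### The variance of the edge count -/

lemma integral_pathLaw {n ℓ : ℕ} {P : Matrix (Fin n) (Fin n) ℝ} {ι : Fin n → ℝ}
    (hP0 : ∀ x y, 0 ≤ P x y) (hι0 : ∀ x, 0 ≤ ι x) (f : (Fin (ℓ + 1) → Fin n) → ℝ) :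
    ∫ ω, f ω ∂(pathLaw n ℓ P ι) = ∑ x, pathWeight P ι ℓ x * f x := by
  unfold pathLaw
  rw [integral_finsetSum_measure]
  · refine Finset.sum_congr rfl fun x _ => ?_
    rw [integral_smul_measure, integral_dirac, smul_eq_mul, ENNReal.toReal_ofReal]
    · rfl
    · exact mul_nonneg (hι0 _) (Finset.prod_nonneg fun _ _ => hP0 _ _)
  · intro x _
    exact (integrable_dirac (by simp)).smul_measure ENNReal.ofReal_ne_top

lemma isProbabilityMeasure_pathLaw {n ℓ : ℕ} {P : Matrix (Fin n) (Fin n) ℝ} {ι : Fin n → ℝ}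
    (hP0 : ∀ x y, 0 ≤ P x y) (hι0 : ∀ x, 0 ≤ ι x) (hι1 : ∑ x, ι x = 1)
    (hst : ∀ y, ∑ x, ι x * P x y = ι y) :
    IsProbabilityMeasure (pathLaw n ℓ P ι) := by
  constructor
  unfold pathLaw
  simp only [Measure.coe_finsetSum, Finset.sum_apply, Measure.smul_apply, measure_univ,
    smul_eq_mul, mul_one]
  rw [← ENNReal.ofReal_sum_of_nonneg
    fun x _ => mul_nonneg (hι0 _) (Finset.prod_nonneg fun _ _ => hP0 _ _)]
  have := moment_zero hst ℓ (fun _ => 1)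
  simp only [mul_one, hι1] at this
  change ENNReal.ofReal (∑ x, pathWeight P ι ℓ x) = 1
  simp [this]

/-- Exact variance in equilibrium, written as the Poisson-type main term `ℓ q` with
`q = ι(e₁) P(e₁,e₂)`, plus corrections governed by the mixing deficits `P^m(e₂,e₁) - ι(e₁)`. -/
lemma variance_edgeCount_eq {n ℓ : ℕ} {P : Matrix (Fin n) (Fin n) ℝ} {ι : Fin n → ℝ}
    (hP0 : ∀ x y, 0 ≤ P x y) (hP1 : ∀ x, ∑ y, P x y = 1)
    (hι0 : ∀ x, 0 ≤ ι x) (hι1 : ∑ x, ι x = 1)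
    (hst : ∀ y, ∑ x, ι x * P x y = ι y) (e : Fin n × Fin n) :
    variance (fun ω => (edgeCount n ℓ ω e : ℝ)) (pathLaw n ℓ P ι)
      = ℓ * (ι e.1 * P e.1 e.2) - ℓ * (ι e.1 * P e.1 e.2) ^ 2
        + 2 * P e.1 e.2 * (ι e.1 * P e.1 e.2) *
          ∑ s ∈ Finset.range ℓ, ∑ m ∈ Finset.range s, ((P ^ m) e.2 e.1 - ι e.1) := by
  have := isProbabilityMeasure_pathLaw (ℓ := ℓ) hP0 hι0 hι1 hst
  have hmem : MemLp (fun ω => (edgeCount n ℓ ω e : ℝ)) 2 (pathLaw n ℓ P ι) :=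
    MemLp.of_discrete
  rw [variance_eq_sub hmem, integral_pathLaw hP0 hι0, integral_pathLaw hP0 hι0]
  have h1 := moment_one hst e ℓ (fun _ => 1)
  have hpow : ∀ m, ((P ^ m) *ᵥ fun _ => (1 : ℝ)) = fun _ => 1 := by
    intro m
    induction m with
    | zero => simp
    | succ m ih =>
      rw [pow_succ, ← Matrix.mulVec_mulVec]
      have : (P *ᵥ fun _ => (1 : ℝ)) = fun _ => 1 := by
        ext x
        simp [Matrix.mulVec, dotProduct, hP1]
      rw [this, ih]
  simp only [mul_one, hpow, Finset.sum_const, Finset.card_range, nsmul_eq_mul] at h1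
  rw [h1]
  simp only [Pi.pow_apply]
  rw [moment_two hP1 hst]
  -- the double sum has `ℓ (ℓ - 1) / 2` terms
  have hsum : ∀ L : ℕ, 2 * ∑ s ∈ Finset.range L, (s : ℝ) = (L : ℝ) ^ 2 - L := by
    intro L
    induction L with
    | zero => simp
    | succ L ih =>
      rw [Finset.sum_range_succ, mul_add, ih]
      push_cast
      ring
  simp only [Finset.sum_sub_distrib, Finset.sum_const, Finset.card_range, nsmul_eq_mul]
  rw [← Finset.sum_mul]
  linear_combination (ι e.1 * P e.1 e.2) ^ 2 * hsum ℓ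

/-! ### Summable mixing from a Doeblin minorization -/

/-- Under `P^r ≥ δ ι`, the operator `P^r` contracts mean-zero functions by `1 - δ` in sup norm.
With `u_m = ‖P^m(·,y) - ι(y)‖ ≤ 1`, this gives `u_{m+r} ≤ (1-δ) u_m`, and hence
`∑_{m<s} u_m ≤ r + (1-δ) ∑_{m<s} u_m`. -/
lemma sum_mixing_le {n : ℕ} {P : Matrix (Fin n) (Fin n) ℝ} {ι : Fin n → ℝ}
    (hP0 : ∀ x y, 0 ≤ P x y) (hP1 : ∀ x, ∑ y, P x y = 1)
    (hι0 : ∀ x, 0 ≤ ι x) (hι1 : ∑ x, ι x = 1)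
    (hst : ∀ y, ∑ x, ι x * P x y = ι y) {r : ℕ} {δ : ℝ} (hδ : 0 < δ)
    (hD : ∀ x y, δ * ι y ≤ (P ^ r) x y) (s : ℕ) (x y : Fin n) :
    ∑ m ∈ Finset.range s, |(P ^ m) x y - ι y| ≤ r / δ := by
  have hpow0 : ∀ m x y, 0 ≤ (P ^ m) x y := by
    intro m
    induction m with
    | zero =>
      intro x y
      rw [pow_zero, Matrix.one_apply]
      split_ifs <;> norm_num
    | succ m ih =>
      intro x y
      rw [pow_succ, Matrix.mul_apply]
      exact Finset.sum_nonneg fun z _ => mul_nonneg (ih _ _) (hP0 _ _)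
  have hpow1 : ∀ m x, ∑ y, (P ^ m) x y = 1 := by
    intro m
    induction m with
    | zero => intro x; simp [Matrix.one_apply]
    | succ m ih =>
      intro x
      simp only [pow_succ, Matrix.mul_apply]
      rw [Finset.sum_comm]
      simp only [← Finset.mul_sum, hP1, mul_one, ih]
  have hpowst : ∀ m y, ∑ x, ι x * (P ^ m) x y = ι y := by
    intro m
    induction m with
    | zero => intro y; simp [Matrix.one_apply]
    | succ m ih =>
      intro y
      simp only [pow_succ, Matrix.mul_apply, Finset.mul_sum]
      rw [Finset.sum_comm]
      simp only [← mul_assoc, ← Finset.sum_mul, ih, hst]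
  have hle1 : ∀ m x y, (P ^ m) x y ≤ 1 := fun m x y => by
    rw [← hpow1 m x]
    exact Finset.single_le_sum (fun z _ => hpow0 m x z) (Finset.mem_univ y)
  have hιle1 : ∀ y, ι y ≤ 1 := fun y => by
    rw [← hι1]
    exact Finset.single_le_sum (fun z _ => hι0 z) (Finset.mem_univ y)
  set g : ℕ → Fin n → ℝ := fun m x => (P ^ m) x y - ι y with hg
  have hgle : ∀ m, ‖g m‖ ≤ 1 := by
    intro m
    refine (pi_norm_le_iff_of_nonneg zero_le_one).2 fun x => ?_
    rw [Real.norm_eq_abs, abs_le]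
    constructor <;> simp only [hg] <;> linarith [hpow0 m x y, hle1 m x y, hι0 y, hιle1 y]
  have hmean : ∀ m, ∑ z, ι z * g m z = 0 := by
    intro m
    simp only [hg, mul_sub, Finset.sum_sub_distrib, ← Finset.sum_mul, hpowst, hι1]
    ring
  have hstep : ∀ m x, g (m + r) x = ∑ z, ((P ^ r) x z - δ * ι z) * g m z := by
    intro m x
    have : ∑ z, ((P ^ r) x z - δ * ι z) * g m z
        = ∑ z, (P ^ r) x z * g m z - δ * ∑ z, ι z * g m z := by
      rw [Finset.mul_sum, ← Finset.sum_sub_distrib]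
      exact Finset.sum_congr rfl fun z _ => by ring
    rw [this, hmean]
    simp only [hg, mul_sub, Finset.sum_sub_distrib, ← Finset.sum_mul, hpow1]
    rw [add_comm m r, pow_add, Matrix.mul_apply]
    ring
  have hδ1 : 0 ≤ 1 - δ := by
    have : 1 - δ = ∑ z, ((P ^ r) x z - δ * ι z) := by
      rw [Finset.sum_sub_distrib, hpow1, ← Finset.mul_sum, hι1, mul_one]
    rw [this]
    exact Finset.sum_nonneg fun z _ => sub_nonneg.2 (hD x z)
  have hcontr : ∀ m, ‖g (m + r)‖ ≤ (1 - δ) * ‖g m‖ := by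
    intro m
    refine (pi_norm_le_iff_of_nonneg (mul_nonneg hδ1 (norm_nonneg _))).2 fun x => ?_
    rw [hstep]
    calc ‖∑ z, ((P ^ r) x z - δ * ι z) * g m z‖
        ≤ ∑ z, ‖((P ^ r) x z - δ * ι z) * g m z‖ := norm_sum_le _ _
      _ ≤ ∑ z, ((P ^ r) x z - δ * ι z) * ‖g m‖ := by
          refine Finset.sum_le_sum fun z _ => ?_
          rw [norm_mul, Real.norm_of_nonneg (sub_nonneg.2 (hD x z))]
          exact mul_le_mul_of_nonneg_left (norm_le_pi_norm _ _) (sub_nonneg.2 (hD x z))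
      _ = (1 - δ) * ‖g m‖ := by
          rw [← Finset.sum_mul, Finset.sum_sub_distrib, hpow1, ← Finset.mul_sum, hι1, mul_one]
  have hS : ∑ m ∈ Finset.range s, ‖g m‖ ≤ r + (1 - δ) * ∑ m ∈ Finset.range s, ‖g m‖ := by
    calc ∑ m ∈ Finset.range s, ‖g m‖
        ≤ ∑ m ∈ Finset.range (r + s), ‖g m‖ :=
          Finset.sum_le_sum_of_subset_of_nonneg
            (Finset.range_subset_range.2 (by omega)) fun _ _ _ => norm_nonneg _
      _ = ∑ m ∈ Finset.range r, ‖g m‖ + ∑ m ∈ Finset.range s, ‖g (r + m)‖ :=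
          Finset.sum_range_add _ _ _
      _ ≤ r + (1 - δ) * ∑ m ∈ Finset.range s, ‖g m‖ := by
          refine add_le_add ?_ ?_
          · refine (Finset.sum_le_sum fun m _ => hgle m).trans ?_
            simp
          · rw [Finset.mul_sum]
            refine Finset.sum_le_sum fun m _ => ?_
            rw [add_comm r m]
            exact hcontr m
  rw [le_div_iff₀ hδ]
  have hfin : ∑ m ∈ Finset.range s, |(P ^ m) x y - ι y| ≤ ∑ m ∈ Finset.range s, ‖g m‖ :=
    Finset.sum_le_sum fun m _ => norm_le_pi_norm (g m) x
  nlinarith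

/-- With `q = ι(e₁) P(e₁,e₂)`, the variance equals `ℓ q` up to a relative error of at most
`P(e₁,e₂)` times a constant depending only on the minorization. -/
lemma abs_variance_sub_le {n ℓ : ℕ} {P : Matrix (Fin n) (Fin n) ℝ} {ι : Fin n → ℝ}
    (hP0 : ∀ x y, 0 ≤ P x y) (hP1 : ∀ x, ∑ y, P x y = 1)
    (hι0 : ∀ x, 0 ≤ ι x) (hι1 : ∑ x, ι x = 1)
    (hst : ∀ y, ∑ x, ι x * P x y = ι y) {r : ℕ} {δ : ℝ} (hδ : 0 < δ)
    (hD : ∀ x y, δ * ι y ≤ (P ^ r) x y) (e : Fin n × Fin n) :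
    |variance (fun ω => (edgeCount n ℓ ω e : ℝ)) (pathLaw n ℓ P ι) - ℓ * (ι e.1 * P e.1 e.2)|
      ≤ ℓ * (ι e.1 * P e.1 e.2) * P e.1 e.2 * (1 + 2 * (r / δ)) := by
  rw [variance_edgeCount_eq hP0 hP1 hι0 hι1 hst]
  have hιle1 : ι e.1 ≤ 1 := by
    rw [← hι1]
    exact Finset.single_le_sum (fun z _ => hι0 z) (Finset.mem_univ e.1)
  have hp := hP0 e.1 e.2
  have hi := hι0 e.1
  have hq : 0 ≤ ι e.1 * P e.1 e.2 := mul_nonneg hi hp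
  have hS : |∑ s ∈ Finset.range ℓ, ∑ m ∈ Finset.range s, ((P ^ m) e.2 e.1 - ι e.1)|
      ≤ ℓ * (r / δ) := by
    refine (Finset.abs_sum_le_sum_abs _ _).trans ?_
    refine (Finset.sum_le_sum fun s _ => (Finset.abs_sum_le_sum_abs _ _).trans
      (sum_mixing_le hP0 hP1 hι0 hι1 hst hδ hD s e.2 e.1)).trans ?_
    simp
  set S := ∑ s ∈ Finset.range ℓ, ∑ m ∈ Finset.range s, ((P ^ m) e.2 e.1 - ι e.1)
  set q := ι e.1 * P e.1 e.2 with hqdef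
  have hqle : q ≤ P e.1 e.2 := by nlinarith
  have e1 : ℓ * q - ℓ * q ^ 2 + 2 * P e.1 e.2 * q * S - ℓ * q
      = 2 * P e.1 e.2 * q * S - ℓ * q ^ 2 := by ring
  rw [e1]
  have b1 : |2 * P e.1 e.2 * q * S| ≤ 2 * P e.1 e.2 * q * (ℓ * (r / δ)) := by
    rw [abs_mul, abs_of_nonneg (by positivity : 0 ≤ 2 * P e.1 e.2 * q)]
    exact mul_le_mul_of_nonneg_left hS (by positivity)
  have b2 : |ℓ * q ^ 2| ≤ ℓ * q * P e.1 e.2 := by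
    rw [abs_of_nonneg (by positivity), pow_two, ← mul_assoc]
    exact mul_le_mul_of_nonneg_left hqle (by positivity)
  calc _ ≤ _ := abs_sub _ _
    _ ≤ 2 * P e.1 e.2 * q * (ℓ * (r / δ)) + ℓ * q * P e.1 e.2 := add_le_add b1 b2
    _ = _ := by ring

/-! ### The block Markov chain -/

section Block

variable {K n : ℕ} {σ : Fin n → Fin K}

/-- Averaging a block-constant function over each cluster and adding up the averages. -/
lemma sum_block (hc : ∀ k, clusterCard n σ k ≠ 0) (f : Fin K → ℝ) :
    ∑ y : Fin n, f (σ y) / (clusterCard n σ (σ y) : ℝ) = ∑ k, f k := by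
  rw [← Finset.sum_fiberwise (s := Finset.univ) (g := σ)]
  refine Finset.sum_congr rfl fun k _ => ?_
  have : ∀ y ∈ Finset.univ.filter (fun y => σ y = k),
      f (σ y) / (clusterCard n σ (σ y) : ℝ) = f k / clusterCard n σ k := by
    intro y hy
    rw [(Finset.mem_filter.1 hy).2]
  rw [Finset.sum_congr rfl this, Finset.sum_const, nsmul_eq_mul]
  change (clusterCard n σ k : ℝ) * _ = _
  have := hc k
  field_simp

lemma bmcTrans_pow (hc : ∀ k, clusterCard n σ k ≠ 0) (p : Matrix (Fin K) (Fin K) ℝ) (m : ℕ)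
    (x y : Fin n) :
    (Matrix.of (bmcTrans p σ) ^ (m + 1)) x y
      = (p ^ (m + 1)) (σ x) (σ y) / (clusterCard n σ (σ y) : ℝ) := by
  induction m generalizing x y with
  | zero => simp [bmcTrans]
  | succ m ih =>
    rw [pow_succ, Matrix.mul_apply, pow_succ p (m + 1), Matrix.mul_apply, Finset.sum_div,
      ← sum_block hc]
    refine Finset.sum_congr rfl fun z _ => ?_
    rw [ih, Matrix.of_apply]
    unfold bmcTrans
    ring

end Block

/-- Used with `d = 1` for the cluster sizes and with `d = 2` for the path length. -/
lemma tendsto_ratio {f : ℕ → ℝ} {a : ℝ} {d : ℕ}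
    (h : (fun n : ℕ => f n - a * (n : ℝ) ^ d) =o[atTop] fun n : ℕ => (n : ℝ) ^ d) :
    Tendsto (fun n : ℕ => f n / (n : ℝ) ^ d) atTop (𝓝 a) := by
  have h1 := h.tendsto_div_nhds_zero.add_const a
  rw [zero_add] at h1
  refine h1.congr' ?_
  filter_upwards [eventually_gt_atTop 0] with n hn
  have : (n : ℝ) ≠ 0 := by positivity
  field_simp
  ring

/-- **Corollary (variance profile).** If `X` starts in equilibrium and
`e_n ∈ V_{k₁} × V_{k₂}` with `p_{k₁,k₂} > 0`, then
`Var[N_{X,e_n}] → λ π(k₁) α_{k₁}⁻¹ α_{k₂}⁻¹ p_{k₁,k₂}`. -/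
theorem variance_edge_count_limit
    (K : ℕ) (hK : 1 ≤ K)
    (p : Matrix (Fin K) (Fin K) ℝ)
    (hp0 : ∀ i j, 0 ≤ p i j) (hp1 : ∀ i, ∑ j, p i j = 1)
    -- irreducible and aperiodic (equivalently, primitive)
    (hprim : ∃ r : ℕ, 0 < r ∧ ∀ i j, 0 < (p ^ r) i j)
    (pst : Fin K → ℝ) (hpst0 : ∀ i, 0 ≤ pst i) (hpst1 : ∑ i, pst i = 1)
    (hstat : ∀ j, ∑ i, pst i * p i j = pst j)
    (α : Fin K → ℝ) (hα : ∀ k, 0 < α k) (hα1 : ∑ k, α k = 1)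
    (lam : ℝ) (hlam : 0 < lam)
    (σ : (n : ℕ) → Fin n → Fin K)
    (hσne : ∀ n, K ≤ n → ∀ k, ∃ v : Fin n, σ n v = k)
    (hσcard : ∀ k, (fun n => ((clusterCard n (σ n) k : ℝ) - α k * n))
        =o[atTop] fun n => (n : ℝ))
    (ℓ : ℕ → ℕ) (hℓ1 : ∀ n, 1 ≤ ℓ n)
    (hℓ : (fun n => ((ℓ n : ℝ) - lam * (n : ℝ) ^ 2)) =o[atTop] fun n => (n : ℝ) ^ 2)
    (k₁ k₂ : Fin K) (hp12 : 0 < p k₁ k₂)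
    -- for each `n ≥ K` a directed edge `e n ∈ V_{k₁} × V_{k₂}`
    (e : (n : ℕ) → K ≤ n → Fin n × Fin n)
    (he : ∀ n (hn : K ≤ n), σ n (e n hn).1 = k₁ ∧ σ n (e n hn).2 = k₂) :
    ∀ ε : ℝ, 0 < ε → ∃ N : ℕ, ∀ n, ∀ hn : K ≤ n, N ≤ n →
      |variance (fun ω => (edgeCount n (ℓ n) ω (e n hn) : ℝ))
          (pathLaw n (ℓ n) (bmcTrans p (σ n)) (bmcEquilib pst (σ n)))
        - lam * pst k₁ * (α k₁)⁻¹ * (α k₂)⁻¹ * p k₁ k₂| < ε := by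
  obtain ⟨r, hr, hpr⟩ := hprim
  have : Nonempty (Fin K) := ⟨⟨0, hK⟩⟩
  -- `δ` is the smallest entry of `p ^ r`
  obtain ⟨δ, hδ, hδle⟩ : ∃ δ : ℝ, 0 < δ ∧ ∀ i j, δ ≤ (p ^ r) i j := by
    obtain ⟨z, hz⟩ := Finite.exists_min fun z : Fin K × Fin K => (p ^ r) z.1 z.2
    exact ⟨_, hpr z.1 z.2, fun i j => hz (i, j)⟩
  have hpstle : ∀ k, pst k ≤ 1 := fun k => by
    rw [← hpst1]
    exact Finset.single_le_sum (fun z _ => hpst0 z) (Finset.mem_univ k)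
  set c : ℕ → Fin K → ℝ := fun n k => (clusterCard n (σ n) k : ℝ) with hcdef
  set M : ℕ → ℝ := fun n => ℓ n * (pst k₁ / c n k₁ * (p k₁ k₂ / c n k₂)) with hMdef
  have hbound : ∀ n (hn : K ≤ n),
      |variance (fun ω => (edgeCount n (ℓ n) ω (e n hn) : ℝ))
          (pathLaw n (ℓ n) (bmcTrans p (σ n)) (bmcEquilib pst (σ n))) - M n|
        ≤ M n * (p k₁ k₂ / c n k₂) * (1 + 2 * (r / δ)) := by
    intro n hn
    have hc : ∀ k, clusterCard n (σ n) k ≠ 0 := by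
      intro k
      obtain ⟨v, hv⟩ := hσne n hn k
      exact Finset.card_ne_zero.2 ⟨v, by simp [hv]⟩
    have hP0 : ∀ x y, 0 ≤ bmcTrans p (σ n) x y := fun x y =>
      div_nonneg (hp0 _ _) (Nat.cast_nonneg _)
    have hP1 : ∀ x, ∑ y, bmcTrans p (σ n) x y = 1 := fun x =>
      (sum_block hc fun k => p (σ n x) k).trans (hp1 _)
    have hι0 : ∀ x, 0 ≤ bmcEquilib pst (σ n) x := fun x =>
      div_nonneg (hpst0 _) (Nat.cast_nonneg _)
    have hι1 : ∑ x, bmcEquilib pst (σ n) x = 1 := (sum_block hc pst).trans hpst1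
    have hst : ∀ y, ∑ x, bmcEquilib pst (σ n) x * bmcTrans p (σ n) x y
        = bmcEquilib pst (σ n) y := by
      intro y
      unfold bmcEquilib bmcTrans
      rw [← hstat (σ n y), Finset.sum_div, ← sum_block hc]
      exact Finset.sum_congr rfl fun x _ => by ring
    have hD : ∀ x y, δ * bmcEquilib pst (σ n) y
        ≤ (Matrix.of (bmcTrans p (σ n)) ^ r) x y := by
      intro x y
      obtain ⟨m, rfl⟩ : ∃ m, r = m + 1 := ⟨r - 1, by omega⟩
      rw [bmcTrans_pow hc]
      unfold bmcEquilib
      rw [← mul_div_assoc]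
      refine div_le_div_of_nonneg_right ?_ (Nat.cast_nonneg _)
      exact (mul_le_of_le_one_right hδ.le (hpstle _)).trans (hδle _ _)
    have hq : bmcEquilib pst (σ n) (e n hn).1 = pst k₁ / c n k₁ := by
      simp only [bmcEquilib, (he n hn).1, hcdef]
    have hPe : Matrix.of (bmcTrans p (σ n)) (e n hn).1 (e n hn).2 = p k₁ k₂ / c n k₂ := by
      simp only [Matrix.of_apply, bmcTrans, (he n hn).1, (he n hn).2, hcdef]
    have := abs_variance_sub_le (P := Matrix.of (bmcTrans p (σ n))) (ℓ := ℓ n) hP0 hP1 hι0 hι1 hst hδ hD (e n hn)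
    rw [hq, hPe] at this
    exact this
  have hcl : ∀ k, Tendsto (fun n : ℕ => c n k / (n : ℝ)) atTop (𝓝 (α k)) := by
    intro k
    have := tendsto_ratio (f := fun n => c n k) (a := α k) (d := 1)
      (by simpa only [pow_one] using hσcard k)
    simpa only [pow_one] using this
  have hM : Tendsto M atTop (𝓝 (lam * pst k₁ * (α k₁)⁻¹ * (α k₂)⁻¹ * p k₁ k₂)) := by
    have h1 := ((((tendsto_ratio hℓ).mul_const (pst k₁)).mul
      ((hcl k₁).inv₀ (hα k₁).ne')).mul ((hcl k₂).inv₀ (hα k₂).ne')).mul_const (p k₁ k₂)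
    refine h1.congr' ?_
    filter_upwards [eventually_gt_atTop 0] with n hn
    have : (n : ℝ) ≠ 0 := by positivity
    simp only [hMdef, inv_div]
    field_simp
  have hsmall : Tendsto (fun n => p k₁ k₂ / c n k₂) atTop (𝓝 0) := by
    have h1 := (((hcl k₂).inv₀ (hα k₂).ne').const_mul (p k₁ k₂)).mul
      (tendsto_inv_atTop_nhds_zero_nat (𝕜 := ℝ))
    rw [mul_zero] at h1
    refine h1.congr' ?_
    filter_upwards [eventually_gt_atTop 0] with n hn
    have : (n : ℝ) ≠ 0 := by positivity
    rw [inv_div]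
    field_simp
  intro ε hε
  have herr : Tendsto (fun n => M n * (p k₁ k₂ / c n k₂) * (1 + 2 * (r / δ))) atTop (𝓝 0) := by
    simpa using (hM.mul hsmall).mul_const (1 + 2 * ((r : ℝ) / δ))
  obtain ⟨N, hN⟩ := eventually_atTop.1
    ((herr.eventually (gt_mem_nhds (half_pos hε))).and
      (Metric.tendsto_nhds.1 hM (ε / 2) (half_pos hε)))
  refine ⟨N, fun n hn hNn => ?_⟩
  obtain ⟨h1, h2⟩ := hN n hNn
  rw [Real.dist_eq] at h2
  have h3 := hbound n hn
  exact (abs_sub_le _ (M n) _).trans_lt (by linarith)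

end
end
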